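/- arXiv:1903.05698 — 6 statements merged into one kernel-verified Lean document; each statement's English description precedes it below -/
import Mathlib

section
/- Assume H is 2q-observable and 2q ≤ m. Then for every fixed y ∈ ℝ^m, the function φ ↦ rad(X(y,φ)) from ℝ to ℝ is monotone nondecreasing and right-continuous at every φ₀ ∈ ℝ. -/
/-- The inconsistency `d_x(y)` for `x ∈ ℝ^n` (with the Euclidean structure). -/
noncomputable def dinc (m n q : ℕ) (H : Matrix (Fin m) (Fin n) ℝ) (W : Fin m → ℝ)
    (x : EuclideanSpace ℝ (Fin n)) (y : Fin m → ℝ) : ℝ :=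
  sInf { v : ℝ | ∃ a : Fin m → ℝ, (Function.support a).ncard ≤ q ∧
    v = (1 / 2 : ℝ) * ∑ i, (y i - (∑ j, H i j * x j) + a i) ^ 2 / W i }

/-- The sublevel set `X(y,φ) := {x : d_x(y) ≤ φ}`. -/
noncomputable def sublevel (m n q : ℕ) (H : Matrix (Fin m) (Fin n) ℝ) (W : Fin m → ℝ)
    (y : Fin m → ℝ) (φ : ℝ) : Set (EuclideanSpace ℝ (Fin n)) :=
  { x | dinc m n q H W x y ≤ φ }

/-- The radius `rad(A) := inf_c sup_{x ∈ A} ‖x − c‖₂` (with `rad ∅ = 0`). -/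
noncomputable def rad (n : ℕ) (A : Set (EuclideanSpace ℝ (Fin n))) : ℝ :=
  ⨅ c : EuclideanSpace ℝ (Fin n), ⨆ x ∈ A, dist x c

/-- `H` is `2q`-observable: every `(m−2q)`-row submatrix has full column rank `n`. -/
def TwoQObservable (m n q : ℕ) (H : Matrix (Fin m) (Fin n) ℝ) : Prop :=
  2 * q ≤ m ∧ ∀ I : Finset (Fin m), I.card = m - 2 * q →
    (Matrix.of fun (i : { i // i ∈ I }) (j : Fin n) => H i.1 j).rank = n

lemma rad_le_of (n : ℕ) (A : Set (EuclideanSpace ℝ (Fin n))) (c : EuclideanSpace ℝ (Fin n))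
    (r : ℝ) (hr : 0 ≤ r) (h : ∀ x ∈ A, dist x c ≤ r) : rad n A ≤ r := by
  have hb : BddBelow (Set.range fun c : EuclideanSpace ℝ (Fin n) => ⨆ x ∈ A, dist x c) := by
    refine ⟨0, ?_⟩
    rintro _ ⟨c, rfl⟩
    exact Real.iSup_nonneg fun x => Real.iSup_nonneg fun _ => dist_nonneg
  refine (ciInf_le hb c).trans ?_
  exact Real.iSup_le (fun x => Real.iSup_le (fun hx => h x hx) hr) hr

lemma rad_nonneg' (n : ℕ) (A : Set (EuclideanSpace ℝ (Fin n))) : 0 ≤ rad n A :=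
  Real.iInf_nonneg fun _ => Real.iSup_nonneg fun _ => Real.iSup_nonneg fun _ => dist_nonneg

lemma exists_of_rad_lt (n : ℕ) (A : Set (EuclideanSpace ℝ (Fin n))) (hA : Bornology.IsBounded A)
    (r : ℝ) (h : rad n A < r) : ∃ c, ∀ x ∈ A, dist x c < r := by
  obtain ⟨c, hc⟩ := exists_lt_of_ciInf_lt h
  refine ⟨c, fun x hx => lt_of_le_of_lt ?_ hc⟩
  obtain ⟨R, hR⟩ := hA.subset_closedBall c
  have hR0 : 0 ≤ R := dist_nonneg.trans (hR hx)
  have hb : BddAbove (Set.range fun x => ⨆ (_ : x ∈ A), dist x c) := by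
    refine ⟨R, ?_⟩
    rintro _ ⟨z, rfl⟩
    exact Real.iSup_le (fun hz => hR hz) hR0
  refine le_trans ?_ (le_ciSup hb x)
  simp [hx]

/-- Partial cost. -/
noncomputable def partCost (m n : ℕ) (H : Matrix (Fin m) (Fin n) ℝ) (W : Fin m → ℝ)
    (y : Fin m → ℝ) (I : Finset (Fin m)) (x : EuclideanSpace ℝ (Fin n)) : ℝ :=
  (1 / 2 : ℝ) * ∑ i ∈ Iᶜ, (y i - (∑ j, H i j * x j)) ^ 2 / W i

/-- Allowed attack supports. -/
def attackSets (m q : ℕ) : Finset (Finset (Fin m)) :=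
  Finset.univ.filter fun I => I.card ≤ q

lemma attackSets_nonempty (m q : ℕ) : (attackSets m q).Nonempty :=
  ⟨∅, by simp [attackSets]⟩

lemma dinc_eq (m n q : ℕ) (H : Matrix (Fin m) (Fin n) ℝ) (W : Fin m → ℝ) (hW : ∀ i, 0 < W i)
    (y : Fin m → ℝ) (x : EuclideanSpace ℝ (Fin n)) :
    dinc m n q H W x y =
      (attackSets m q).inf' (attackSets_nonempty m q) (fun I => partCost m n H W y I x) := by
  classical
  apply le_antisymm
  · apply Finset.le_inf'
    intro I hI
    apply csInf_le
    · refine ⟨0, ?_⟩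
      rintro _ ⟨a, -, rfl⟩
      have : 0 ≤ ∑ i, (y i - (∑ j, H i j * x j) + a i) ^ 2 / W i :=
        Finset.sum_nonneg fun i _ => div_nonneg (sq_nonneg _) (hW i).le
      linarith
    · refine ⟨fun i => if i ∈ I then -(y i - (∑ j, H i j * x j)) else 0, ?_, ?_⟩
      · have h1 : Function.support (fun i => if i ∈ I then -(y i - (∑ j, H i j * x j)) else 0)
            ⊆ (I : Set (Fin m)) := by
          intro i hi
          by_contra h
          have h' : i ∉ I := h
          simp [h'] at hi
        have h2 := Set.ncard_le_ncard h1 (Finset.finite_toSet I)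
        rw [Set.ncard_coe_finset] at h2
        exact h2.trans (by simpa [attackSets] using hI)
      · unfold partCost
        congr 1
        symm
        rw [← Finset.sum_add_sum_compl I, Finset.sum_eq_zero (s := I), zero_add]
        · apply Finset.sum_congr rfl
          intro i hi
          simp [Finset.mem_compl.1 hi]
        · intro i hi
          simp [hi]
  · apply le_csInf
    · exact ⟨_, 0, by simp, rfl⟩
    · rintro _ ⟨a, ha, rfl⟩
      have hI : (Function.support a).toFinset ∈ attackSets m q := by
        rw [Set.ncard_eq_toFinset_card'] at ha
        simpa [attackSets] using ha
      refine (Finset.inf'_le _ hI).trans ?_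
      unfold partCost
      refine mul_le_mul_of_nonneg_left ?_ (by norm_num)
      have : ∑ i ∈ (Function.support a).toFinsetᶜ, (y i - (∑ j, H i j * x j)) ^ 2 / W i
          = ∑ i ∈ (Function.support a).toFinsetᶜ, (y i - (∑ j, H i j * x j) + a i) ^ 2 / W i := by
        apply Finset.sum_congr rfl
        intro i hi
        have : a i = 0 := by simpa using hi
        simp [this]
      rw [this]
      exact Finset.sum_le_sum_of_subset_of_nonneg (Finset.subset_univ _)
        fun i _ _ => div_nonneg (sq_nonneg _) (hW i).le

lemma continuous_dinc (m n q : ℕ) (H : Matrix (Fin m) (Fin n) ℝ) (W : Fin m → ℝ)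
    (hW : ∀ i, 0 < W i) (y : Fin m → ℝ) : Continuous fun x => dinc m n q H W x y := by
  simp only [dinc_eq m n q H W hW y]
  apply Continuous.finset_inf'_apply
  intro I _
  unfold partCost
  fun_prop

lemma bounded_part (m n q : ℕ) (H : Matrix (Fin m) (Fin n) ℝ) (W : Fin m → ℝ)
    (hW : ∀ i, 0 < W i) (hobs : TwoQObservable m n q H) (y : Fin m → ℝ) (φ : ℝ)
    (I : Finset (Fin m)) (hI : I ∈ attackSets m q) :
    Bornology.IsBounded {x | partCost m n H W y I x ≤ φ} := by
  classical
  have hIc : I.card ≤ q := by simpa [attackSets] using hI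
  obtain ⟨J, hJI, hJ⟩ : ∃ J ⊆ Iᶜ, J.card = m - 2 * q := by
    apply Finset.exists_subset_card_eq
    rw [Finset.card_compl, Fintype.card_fin]
    omega
  have hr := hobs.2 J hJ
  set M := (Matrix.of fun (i : { i // i ∈ J }) (j : Fin n) => H i.1 j) with hM
  have hker : LinearMap.ker M.mulVecLin = ⊥ := by
    have := LinearMap.finrank_range_add_finrank_ker M.mulVecLin
    rw [← Matrix.rank, hr] at this
    apply Submodule.finrank_eq_zero.1
    simpa using this
  let L : EuclideanSpace ℝ (Fin n) →ₗ[ℝ] ({ i // i ∈ J } → ℝ) :=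
    M.mulVecLin ∘ₗ (WithLp.linearEquiv 2 ℝ (Fin n → ℝ)).toLinearMap
  have hL : LinearMap.ker L = ⊥ := by
    rw [LinearMap.ker_eq_bot] at hker ⊢
    exact hker.comp (WithLp.linearEquiv 2 ℝ (Fin n → ℝ)).injective
  have hLx : ∀ x i, L x i = ∑ j, H i.1 j * x j := by
    intro x i
    simp [L, Matrix.mulVec, dotProduct, hM]
  obtain ⟨K, _, hK⟩ := L.exists_antilipschitzWith hL
  refine (hK.isBounded_preimage (Metric.isBounded_Icc
    (fun i : { i // i ∈ J } => y i.1 - (2 * W i.1 * φ + 1))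
    (fun i => y i.1 + (2 * W i.1 * φ + 1)))).subset ?_
  intro x hx
  have key : ∀ i : { i // i ∈ J }, (y i.1 - L x i) ^ 2 ≤ 2 * W i.1 * φ := by
    intro i
    have h1 : (y i.1 - (∑ j, H i.1 j * x j)) ^ 2 / W i.1 ≤
        ∑ i ∈ Iᶜ, (y i - (∑ j, H i j * x j)) ^ 2 / W i :=
      Finset.single_le_sum (f := fun i => (y i - (∑ j, H i j * x j)) ^ 2 / W i)
        (fun i _ => div_nonneg (sq_nonneg _) (hW i).le) (hJI i.2)
    have h2 : (1 / 2 : ℝ) * ∑ i ∈ Iᶜ, (y i - (∑ j, H i j * x j)) ^ 2 / W i ≤ φ := hx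
    have h3 : (y i.1 - (∑ j, H i.1 j * x j)) ^ 2 / W i.1 ≤ 2 * φ := by linarith
    rw [div_le_iff₀ (hW i.1)] at h3
    rw [hLx]
    linarith
  refine ⟨fun i => ?_, fun i => ?_⟩
  · show y i.1 - (2 * W i.1 * φ + 1) ≤ L x i
    nlinarith [key i, sq_nonneg (y i.1 - L x i - 1), sq_nonneg (y i.1 - L x i)]
  · show L x i ≤ y i.1 + (2 * W i.1 * φ + 1)
    nlinarith [key i, sq_nonneg (y i.1 - L x i + 1), sq_nonneg (y i.1 - L x i)]

lemma bounded_sublevel (m n q : ℕ) (H : Matrix (Fin m) (Fin n) ℝ) (W : Fin m → ℝ)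
    (hW : ∀ i, 0 < W i) (hobs : TwoQObservable m n q H) (y : Fin m → ℝ) (φ : ℝ) :
    Bornology.IsBounded (sublevel m n q H W y φ) := by
  refine ((Bornology.isBounded_biUnion_finset (attackSets m q)).2
    fun I hI => bounded_part m n q H W hW hobs y φ I hI).subset ?_
  intro x hx
  have hx' : dinc m n q H W x y ≤ φ := hx
  rw [dinc_eq m n q H W hW, Finset.inf'_le_iff] at hx'
  obtain ⟨I, hI, h⟩ := hx'
  exact Set.mem_biUnion hI h

theorem stmt_4 (m n q : ℕ) (hm : 1 ≤ m) (hn : 1 ≤ n) (hq : q ≤ m)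
    (H : Matrix (Fin m) (Fin n) ℝ) (W : Fin m → ℝ) (hW : ∀ i, 0 < W i)
    (hobs : TwoQObservable m n q H) (y : Fin m → ℝ) :
    Monotone (fun φ : ℝ => rad n (sublevel m n q H W y φ)) ∧
    ∀ φ₀ : ℝ, ContinuousWithinAt (fun φ : ℝ => rad n (sublevel m n q H W y φ))
      (Set.Ici φ₀) φ₀ := by
  have hbd := bounded_sublevel m n q H W hW hobs y
  have hmono : Monotone (fun φ : ℝ => rad n (sublevel m n q H W y φ)) := by
    intro φ ψ h
    refine le_of_forall_gt_imp_ge_of_dense fun r hr => ?_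
    obtain ⟨c, hc⟩ := exists_of_rad_lt n _ (hbd ψ) r hr
    exact rad_le_of n _ c r ((rad_nonneg' n _).trans hr.le)
      fun x hx => (hc x (le_trans (show dinc m n q H W x y ≤ φ from hx) h)).le
  refine ⟨hmono, fun φ₀ => ?_⟩
  have hcont := continuous_dinc m n q H W hW y
  rw [ContinuousWithinAt, tendsto_order]
  refine ⟨fun a ha => ?_, fun b hb => ?_⟩
  · filter_upwards [self_mem_nhdsWithin] with φ hφ
    exact ha.trans_le (hmono hφ)
  · obtain ⟨r, hr1, hr2⟩ := exists_between hb
    have hr0 : 0 ≤ r := (rad_nonneg' n _).trans hr1.le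
    obtain ⟨c, hc⟩ := exists_of_rad_lt n _ (hbd φ₀) r hr1
    have hcl : IsClosed (sublevel m n q H W y (φ₀ + 1)) := isClosed_le hcont continuous_const
    have hK : IsCompact (sublevel m n q H W y (φ₀ + 1)) :=
      Metric.isCompact_of_isClosed_isBounded hcl (hbd _)
    have hK' : IsCompact (sublevel m n q H W y (φ₀ + 1) ∩ (Metric.ball c r)ᶜ) :=
      hK.inter_right Metric.isOpen_ball.isClosed_compl
    obtain ⟨δ, hδ, hδ'⟩ : ∃ δ > φ₀, ∀ φ < δ,
        ∀ x ∈ sublevel m n q H W y φ, dist x c ≤ r := by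
      rcases Set.eq_empty_or_nonempty
        (sublevel m n q H W y (φ₀ + 1) ∩ (Metric.ball c r)ᶜ) with he | hne
      · refine ⟨φ₀ + 1, by linarith, fun φ hφ x hx => ?_⟩
        by_contra hcon
        have : x ∈ sublevel m n q H W y (φ₀ + 1) ∩ (Metric.ball c r)ᶜ :=
          ⟨le_trans (show dinc m n q H W x y ≤ φ from hx) hφ.le,
            fun h => hcon (Metric.mem_ball.1 h).le⟩
        rw [he] at this
        exact this
      · obtain ⟨z, hz, hmin⟩ := hK'.exists_isMinOn hne hcont.continuousOn
        have hz0 : φ₀ < dinc m n q H W z y := by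
          by_contra hcon
          exact hz.2 (hc z (not_lt.1 hcon))
        refine ⟨min (φ₀ + 1) (dinc m n q H W z y), lt_min (by linarith) hz0,
          fun φ hφ x hx => ?_⟩
        by_contra hcon
        have hx' : dinc m n q H W x y ≤ φ := hx
        have : x ∈ sublevel m n q H W y (φ₀ + 1) ∩ (Metric.ball c r)ᶜ :=
          ⟨hx'.trans (hφ.le.trans (min_le_left _ _)),
            fun h => hcon (Metric.mem_ball.1 h).le⟩
        have h2 : dinc m n q H W z y ≤ dinc m n q H W x y := hmin this
        have := hφ.trans_le (min_le_right _ _)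
        linarith
    filter_upwards [mem_nhdsWithin_of_mem_nhds (Iio_mem_nhds hδ)] with φ hφ
    exact (rad_le_of n _ c r hr0 (hδ' φ hφ)).trans_lt hr2
end

section
/- Assume H is 2q-observable and 2q ≤ m, and fix y ∈ ℝ^m. If the function φ ↦ rad(X(y,φ)) is discontinuous at a point φ₀ ∈ ℝ, then there exists an index set I ⊆ {1,…,m} with |I| = m − q such that res(I) = φ₀. -/
/-- The restricted inconsistency `d_x(y, I)`. -/
noncomputable def dres (m n : ℕ) (H : Matrix (Fin m) (Fin n) ℝ) (W : Fin m → ℝ)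
    (x : EuclideanSpace ℝ (Fin n)) (y : Fin m → ℝ) (I : Finset (Fin m)) : ℝ :=
  (1 / 2 : ℝ) * ∑ i ∈ I, (y i - (∑ j, H i j * x j)) ^ 2 / W i

/-- The residue `res(I) := min_x d_x(y, I)`. -/
noncomputable def res (m n : ℕ) (H : Matrix (Fin m) (Fin n) ℝ) (W : Fin m → ℝ)
    (y : Fin m → ℝ) (I : Finset (Fin m)) : ℝ :=
  ⨅ x : EuclideanSpace ℝ (Fin n), dres m n H W x y I

open Filter Topology in
theorem aux_conv {E : Type*} [NormedAddCommGroup E] [NormedSpace ℝ E] (f : E → ℝ) (φ₀ : ℝ) (z : E)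
    (hc : ∀ x t, 0 ≤ t → t ≤ 1 → f ((1 - t) • x + t • z) ≤ (1 - t) * f x + t * f z)
    (hz : f z < φ₀) (hb : Bornology.IsBounded {x | f x ≤ φ₀ + 1}) (ε : ℝ) (hε : 0 < ε) :
    ∃ δ > 0, ∀ φ φ', |φ - φ₀| < δ → |φ' - φ₀| < δ → ∀ x, f x ≤ φ →
      ∃ x', f x' ≤ φ' ∧ dist x x' ≤ ε := by
  obtain ⟨D, hD⟩ := hb.subset_closedBall z
  have hD0 : 0 ≤ D := by
    have : z ∈ {x | f x ≤ φ₀ + 1} := by simp only [Set.mem_ofPred_eq]; linarith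
    have := hD this
    simpa using this
  set t := ε / (D + ε) with ht
  have hDε : 0 < D + ε := by linarith
  have ht0 : 0 < t := by positivity
  have ht1 : t ≤ 1 := by rw [ht, div_le_one hDε]; linarith
  have htD : t * D ≤ ε := by
    rw [ht, div_mul_eq_mul_div, div_le_iff₀ hDε]; nlinarith
  have hη : 0 < φ₀ - f z := by linarith
  refine ⟨min 1 (t * (φ₀ - f z) / 2), by positivity, ?_⟩
  intro φ φ' h1 h2 x hx
  have a1 := lt_of_lt_of_le h1 (min_le_left _ _)
  have a2 := lt_of_lt_of_le h1 (min_le_right _ _)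
  have a3 := lt_of_lt_of_le h2 (min_le_right _ _)
  rw [abs_lt] at a1 a2 a3
  refine ⟨(1 - t) • x + t • z, ?_, ?_⟩
  · have := hc x t ht0.le ht1
    have h3 : (1 - t) * f x ≤ (1 - t) * (φ₀ + t * (φ₀ - f z) / 2) :=
      mul_le_mul_of_nonneg_left (by linarith) (by linarith)
    have h4 : 0 ≤ t * (t * (φ₀ - f z)) := by positivity
    nlinarith
  · have hx' : x ∈ {x | f x ≤ φ₀ + 1} := by simp only [Set.mem_ofPred_eq]; linarith
    have h5 := hD hx'
    rw [Metric.mem_closedBall, dist_eq_norm] at h5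
    have : x - ((1 - t) • x + t • z) = t • (x - z) := by module
    rw [dist_eq_norm, this, norm_smul, Real.norm_of_nonneg ht0.le]
    exact (mul_le_mul_of_nonneg_left h5 ht0.le).trans htD

theorem aux_rad (n : ℕ) (A B : Set (EuclideanSpace ℝ (Fin n))) (ε : ℝ) (hε : 0 ≤ ε)
    (hB : Bornology.IsBounded B) (h : ∀ x ∈ A, ∃ x' ∈ B, dist x x' ≤ ε) :
    rad n A ≤ rad n B + ε := by
  unfold rad
  rw [← sub_le_iff_le_add]
  refine le_ciInf fun c => ?_
  rw [sub_le_iff_le_add]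
  have hn : ∀ (S : Set (EuclideanSpace ℝ (Fin n))) c, 0 ≤ ⨆ x ∈ S, dist x c := fun S c =>
    Real.iSup_nonneg fun x => Real.iSup_nonneg fun _ => dist_nonneg
  refine (ciInf_le ⟨0, ?_⟩ c).trans ?_
  · rintro _ ⟨c, rfl⟩
    exact hn A c
  have h0 := hn B c
  refine Real.iSup_le (fun x => Real.iSup_le (fun hx => ?_) (by linarith)) (by linarith)
  obtain ⟨x', hx', hd⟩ := h x hx
  obtain ⟨D, hD⟩ := hB.subset_closedBall c
  have hle : dist x' c ≤ ⨆ x ∈ B, dist x c := by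
    refine le_ciSup_of_le (f := fun x => ⨆ (_ : x ∈ B), dist x c) ⟨max D 0, ?_⟩ x' ?_
    · rintro _ ⟨w, rfl⟩
      exact Real.iSup_le (fun hw => (hD hw).trans (le_max_left _ _)) (le_max_right _ _)
    · simp [hx']
  linarith [dist_triangle x x' c]

theorem aux_nonneg {m n : ℕ} (H : Matrix (Fin m) (Fin n) ℝ) (W : Fin m → ℝ) (hW : ∀ i, 0 < W i)
    (y : Fin m → ℝ) (I : Finset (Fin m)) (x : EuclideanSpace ℝ (Fin n)) :
    0 ≤ dres m n H W x y I := by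
  unfold dres
  have : ∀ i ∈ I, 0 ≤ (y i - (∑ j, H i j * x j)) ^ 2 / W i := fun i _ =>
    div_nonneg (sq_nonneg _) (hW i).le
  have := Finset.sum_nonneg this
  linarith

theorem aux_dinc {m n q : ℕ} (hq : q ≤ m) (H : Matrix (Fin m) (Fin n) ℝ) (W : Fin m → ℝ)
    (hW : ∀ i, 0 < W i) (y : Fin m → ℝ) (x : EuclideanSpace ℝ (Fin n)) (φ : ℝ) :
    dinc m n q H W x y ≤ φ ↔ ∃ I : Finset (Fin m), I.card = m - q ∧ dres m n H W x y I ≤ φ := by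
  classical
  have key : ∀ (I : Finset (Fin m)) (a : Fin m → ℝ), (∀ i ∈ I, a i = 0) → dres m n H W x y I ≤
      (1 / 2 : ℝ) * ∑ i, (y i - (∑ j, H i j * x j) + a i) ^ 2 / W i := by
    intro I a ha
    unfold dres
    refine mul_le_mul_of_nonneg_left ?_ (by norm_num)
    calc _ = ∑ i ∈ I, (y i - (∑ j, H i j * x j) + a i) ^ 2 / W i :=
          Finset.sum_congr rfl fun i hi => by rw [ha i hi, add_zero]
      _ ≤ _ := Finset.sum_le_sum_of_subset_of_nonneg (Finset.subset_univ _)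
          fun i _ _ => div_nonneg (sq_nonneg _) (hW i).le
  constructor
  · intro h
    have hne : (Finset.powersetCard (m - q) (Finset.univ : Finset (Fin m))).Nonempty := by
      rw [Finset.powersetCard_nonempty]; simp
    obtain ⟨I, hI, hmin⟩ := Finset.exists_min_image _ (fun I => dres m n H W x y I) hne
    refine ⟨I, (Finset.mem_powersetCard.1 hI).2, le_trans ?_ h⟩
    unfold dinc
    refine le_csInf ⟨_, 0, by simp, rfl⟩ ?_
    rintro _ ⟨a, ha, rfl⟩
    have hs : (Finset.univ.filter fun i => a i ≠ 0).card ≤ q := by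
      rw [← Set.ncard_coe_finset]
      convert ha using 2
      ext i; simp
    have hs2 : m - q ≤ (Finset.univ.filter fun i => a i ≠ 0)ᶜ.card := by
      rw [Finset.card_compl, Fintype.card_fin]; omega
    obtain ⟨J, hJ, hJc⟩ := Finset.exists_subset_card_eq hs2
    refine (hmin J (Finset.mem_powersetCard.2 ⟨Finset.subset_univ _, hJc⟩)).trans (key J a ?_)
    intro i hi
    have := hJ hi
    simpa using this
  · rintro ⟨I, hI, hle⟩
    refine le_trans ?_ hle
    unfold dinc
    refine csInf_le ⟨0, ?_⟩ ⟨fun i => if i ∈ I then 0 else -(y i - ∑ j, H i j * x j), ?_, ?_⟩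
    · rintro _ ⟨a, ha, rfl⟩
      have := Finset.sum_nonneg (s := Finset.univ) fun i _ =>
        div_nonneg (sq_nonneg (y i - (∑ j, H i j * x j) + a i)) (hW i).le
      linarith
    · have : (Function.support fun i => if i ∈ I then 0 else -(y i - ∑ j, H i j * x j)) ⊆
          ((Iᶜ : Finset (Fin m)) : Set (Fin m)) := by
        intro i hi
        simp only [Function.mem_support] at hi
        simp only [Finset.coe_compl, Set.mem_compl_iff, Finset.mem_coe]
        intro h; simp [h] at hi
      have := Set.ncard_le_ncard this
      rw [Set.ncard_coe_finset, Finset.card_compl, Fintype.card_fin] at this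
      omega
    · unfold dres
      congr 1
      rw [← Finset.sum_subset (Finset.subset_univ I)]
      · exact Finset.sum_congr rfl fun i hi => by simp [hi]
      · intro i _ hi; simp [hi]

theorem aux_bdd {m n q : ℕ} (H : Matrix (Fin m) (Fin n) ℝ) (W : Fin m → ℝ)
    (hW : ∀ i, 0 < W i) (hobs : TwoQObservable m n q H) (y : Fin m → ℝ) (I : Finset (Fin m))
    (hI : I.card = m - q) (φ : ℝ) :
    Bornology.IsBounded {x | dres m n H W x y I ≤ φ} := by
  classical
  obtain ⟨J, hJ, hJc⟩ := Finset.exists_subset_card_eq (show m - 2 * q ≤ I.card by omega)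
  have hr := hobs.2 J hJc
  set M := (Matrix.of fun (i : { i // i ∈ J }) (j : Fin n) => H i.1 j) with hM
  let L : EuclideanSpace ℝ (Fin n) →ₗ[ℝ] ({ i // i ∈ J } → ℝ) :=
    M.mulVecLin ∘ₗ (WithLp.linearEquiv 2 ℝ (Fin n → ℝ)).toLinearMap
  have hker : LinearMap.ker M.mulVecLin = ⊥ := by
    have h := M.mulVecLin.finrank_range_add_finrank_ker
    rw [Matrix.rank] at hr
    rw [hr] at h
    simp at h
    exact h
  have hL : LinearMap.ker L = ⊥ := by
    rw [LinearMap.ker_eq_bot] at hker ⊢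
    exact hker.comp (WithLp.linearEquiv 2 ℝ (Fin n → ℝ)).injective
  obtain ⟨K, -, hK⟩ := L.exists_antilipschitzWith hL
  have hb : Bornology.IsBounded (Set.pi Set.univ fun i : { i // i ∈ J } =>
      Metric.closedBall (y i) (2 * W i * φ + 1)) :=
    Bornology.IsBounded.pi fun i => Metric.isBounded_closedBall
  refine (hK.isBounded_preimage hb).subset ?_
  intro x hx i _
  have hLi : L x i = ∑ j, H i j * x j := by
    simp [L, hM, Matrix.mulVec, dotProduct]
  rw [Metric.mem_closedBall, hLi, Real.dist_eq, abs_sub_comm]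
  have h1 := Finset.single_le_sum (f := fun i => (y i - (∑ j, H i j * x j)) ^ 2 / W i)
    (fun i _ => div_nonneg (sq_nonneg _) (hW i).le) (hJ i.2)
  simp only [Set.mem_ofPred_eq, dres] at hx
  have h2 : (y i - (∑ j, H i j * x j)) ^ 2 / W i ≤ 2 * φ := by
    simp only at h1; linarith
  rw [div_le_iff₀ (hW i)] at h2
  set r := y i - (∑ j, H i j * x j)
  rw [← sq_abs] at h2
  nlinarith [sq_nonneg (|r| - 1)]

theorem aux_convex {m n : ℕ} (H : Matrix (Fin m) (Fin n) ℝ) (W : Fin m → ℝ)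
    (hW : ∀ i, 0 < W i) (y : Fin m → ℝ) (I : Finset (Fin m)) (x z : EuclideanSpace ℝ (Fin n))
    (t : ℝ) (h0 : 0 ≤ t) (h1 : t ≤ 1) :
    dres m n H W ((1 - t) • x + t • z) y I ≤
      (1 - t) * dres m n H W x y I + t * dres m n H W z y I := by
  unfold dres
  have : ∑ i ∈ I, (y i - (∑ j, H i j * ((1 - t) • x + t • z) j)) ^ 2 / W i ≤
      ∑ i ∈ I, ((1 - t) * ((y i - (∑ j, H i j * x j)) ^ 2 / W i) +
        t * ((y i - (∑ j, H i j * z j)) ^ 2 / W i)) := by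
    refine Finset.sum_le_sum fun i _ => ?_
    have e : ∑ j, H i j * ((1 - t) • x + t • z) j =
        (1 - t) * (∑ j, H i j * x j) + t * ∑ j, H i j * z j := by
      rw [Finset.mul_sum, Finset.mul_sum, ← Finset.sum_add_distrib]
      refine Finset.sum_congr rfl fun j _ => ?_
      simp; ring
    rw [e, ← mul_div_assoc, ← mul_div_assoc, ← add_div]
    refine div_le_div_of_nonneg_right ?_ (hW i).le
    set a := ∑ j, H i j * x j
    set b := ∑ j, H i j * z j
    nlinarith [mul_nonneg (mul_nonneg h0 (sub_nonneg.2 h1)) (sq_nonneg (a - b))]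
  rw [Finset.sum_add_distrib, ← Finset.mul_sum, ← Finset.mul_sum] at this
  linarith

/-- if `φ ↦ rad(X(y,φ))` is discontinuous at `φ₀`, then some index
set `I` of cardinality `m − q` has residue `res(I) = φ₀`. -/
theorem stmt_5 (m n q : ℕ) (hm : 1 ≤ m) (hn : 1 ≤ n) (hq : q ≤ m)
    (H : Matrix (Fin m) (Fin n) ℝ) (W : Fin m → ℝ) (hW : ∀ i, 0 < W i)
    (hobs : TwoQObservable m n q H) (y : Fin m → ℝ) (φ₀ : ℝ)
    (hdisc : ¬ ContinuousAt (fun φ : ℝ => rad n (sublevel m n q H W y φ)) φ₀) :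
    ∃ I : Finset (Fin m), I.card = m - q ∧ res m n H W y I = φ₀ := by
  classical
  by_contra hno
  push Not at hno
  apply hdisc
  have hbd : ∀ φ, Bornology.IsBounded (sublevel m n q H W y φ) := by
    intro φ
    have : sublevel m n q H W y φ ⊆
        ⋃ I : {I : Finset (Fin m) // I.card = m - q}, {x | dres m n H W x y I.1 ≤ φ} := by
      intro x hx
      obtain ⟨I, hI, h⟩ := (aux_dinc hq H W hW y x φ).1 hx
      exact Set.mem_iUnion.2 ⟨⟨I, hI⟩, h⟩
    exact (Bornology.isBounded_iUnion.2 fun I : {I : Finset (Fin m) // I.card = m - q} => aux_bdd H W hW hobs y I.1 I.2 φ).subset this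
  have main : ∀ ε > 0, ∀ I : Finset (Fin m), ∀ᶠ φ in nhds φ₀, I.card = m - q →
      (∀ x, dres m n H W x y I ≤ φ → ∃ x', dres m n H W x' y I ≤ φ₀ ∧ dist x x' ≤ ε) ∧
      (∀ x, dres m n H W x y I ≤ φ₀ → ∃ x', dres m n H W x' y I ≤ φ ∧ dist x x' ≤ ε) := by
    intro ε hε I
    by_cases hI : I.card = m - q
    swap
    · exact Filter.Eventually.of_forall fun φ h => absurd h hI
    have hbb : BddBelow (Set.range fun x : EuclideanSpace ℝ (Fin n) => dres m n H W x y I) := by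
      refine ⟨0, ?_⟩
      rintro _ ⟨x, rfl⟩
      exact aux_nonneg H W hW y I x
    rcases lt_or_gt_of_ne (hno I hI) with h | h
    · obtain ⟨z, hz⟩ := exists_lt_of_ciInf_lt h
      obtain ⟨δ, hδ, hd⟩ := aux_conv (fun x => dres m n H W x y I) φ₀ z
        (fun x t h0 h1 => aux_convex H W hW y I x z t h0 h1) hz
        (aux_bdd H W hW hobs y I hI _) ε hε
      filter_upwards [Metric.ball_mem_nhds φ₀ hδ] with φ hφ _
      rw [Metric.mem_ball, Real.dist_eq] at hφ
      exact ⟨hd φ φ₀ hφ (by simpa using hδ), hd φ₀ φ (by simpa using hδ) hφ⟩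
    · filter_upwards [Iio_mem_nhds h] with φ hφ _
      have hge : ∀ x, res m n H W y I ≤ dres m n H W x y I := fun x => ciInf_le hbb x
      exact ⟨fun x hx => absurd ((hge x).trans hx) (not_le.2 hφ),
        fun x hx => absurd ((hge x).trans hx) (not_le.2 h)⟩
  rw [Metric.continuousAt_iff']
  intro ε hε
  have hall := Filter.eventually_all.2 (main (ε / 2) (by linarith))
  filter_upwards [hall] with φ hφ
  have r1 := aux_rad n (sublevel m n q H W y φ) (sublevel m n q H W y φ₀) (ε / 2) (by linarith)
    (hbd _) (by
      intro x hx
      obtain ⟨I, hI, h⟩ := (aux_dinc hq H W hW y x φ).1 hx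
      obtain ⟨x', h', hd⟩ := (hφ I hI).1 x h
      exact ⟨x', (aux_dinc hq H W hW y x' φ₀).2 ⟨I, hI, h'⟩, hd⟩)
  have r2 := aux_rad n (sublevel m n q H W y φ₀) (sublevel m n q H W y φ) (ε / 2) (by linarith)
    (hbd _) (by
      intro x hx
      obtain ⟨I, hI, h⟩ := (aux_dinc hq H W hW y x φ₀).1 hx
      obtain ⟨x', h', hd⟩ := (hφ I hI).2 x h
      exact ⟨x', (aux_dinc hq H W hW y x' φ).2 ⟨I, hI, h'⟩, hd⟩)
  rw [Real.dist_eq, abs_lt]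
  constructor <;> linarith
end

section
/- Assume H is 2q-observable and 2q ≤ m, and fix y ∈ ℝ^m. The function φ ↦ rad(X(y,φ)) is strictly increasing wherever it is positive: for all real numbers φ₁ < φ₂, if rad(X(y,φ₁)) > 0 then rad(X(y,φ₁)) < rad(X(y,φ₂)). -/
noncomputable def gfun (m n : ℕ) (H : Matrix (Fin m) (Fin n) ℝ) (W : Fin m → ℝ) (y : Fin m → ℝ)
    (S : Finset (Fin m)) (x : EuclideanSpace ℝ (Fin n)) : ℝ :=
  (1 / 2 : ℝ) * ∑ i ∈ Sᶜ, (y i - (∑ j, H i j * x j)) ^ 2 / W i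

theorem gfun_cont (m n : ℕ) (H : Matrix (Fin m) (Fin n) ℝ) (W : Fin m → ℝ) (y : Fin m → ℝ)
    (S : Finset (Fin m)) : Continuous (gfun m n H W y S) := by
  unfold gfun
  refine continuous_const.mul (continuous_finsetSum _ fun i _ => ?_)
  refine Continuous.div_const ?_ _
  fun_prop

theorem dinc_le (m n q : ℕ) (H : Matrix (Fin m) (Fin n) ℝ) (W : Fin m → ℝ) (hW : ∀ i, 0 < W i)
    (y : Fin m → ℝ) (S : Finset (Fin m)) (hS : S.card ≤ q) (x : EuclideanSpace ℝ (Fin n)) :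
    dinc m n q H W x y ≤ gfun m n H W y S x := by
  classical
  apply csInf_le
  · refine ⟨0, ?_⟩
    rintro v ⟨a, -, rfl⟩
    exact mul_nonneg (by norm_num)
      (Finset.sum_nonneg fun i _ => div_nonneg (sq_nonneg _) (hW i).le)
  · refine ⟨fun i => if i ∈ S then -(y i - (∑ j, H i j * x j)) else 0, ?_, ?_⟩
    · refine le_trans ?_ hS
      rw [← Set.ncard_coe_finset]
      refine Set.ncard_le_ncard ?_ (Finset.finite_toSet S)
      intro i hi
      by_contra h
      apply hi
      simp only [Finset.mem_coe] at h
      simp [h]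
    · unfold gfun
      congr 1
      rw [← Finset.sum_compl_add_sum S]
      have h0 : ∀ i ∈ S, (y i - (∑ j, H i j * x j) +
          (if i ∈ S then -(y i - (∑ j, H i j * x j)) else 0)) ^ 2 / W i = 0 := by
        intro i hi
        rw [if_pos hi]
        ring
      rw [Finset.sum_eq_zero h0, add_zero]
      refine Finset.sum_congr rfl fun i hi => ?_
      beta_reduce
      rw [if_neg (Finset.mem_compl.1 hi), add_zero]

theorem exists_le_dinc (m n q : ℕ) (H : Matrix (Fin m) (Fin n) ℝ) (W : Fin m → ℝ)
    (hW : ∀ i, 0 < W i) (y : Fin m → ℝ) (x : EuclideanSpace ℝ (Fin n)) :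
    ∃ S : Finset (Fin m), S.card ≤ q ∧ gfun m n H W y S x ≤ dinc m n q H W x y := by
  classical
  obtain ⟨S, hS, hmin⟩ := Finset.exists_min_image
    (Finset.univ.filter fun S : Finset (Fin m) => S.card ≤ q)
    (fun S => gfun m n H W y S x) ⟨∅, by simp⟩
  refine ⟨S, (Finset.mem_filter.1 hS).2, ?_⟩
  apply le_csInf
  · exact ⟨_, 0, by simp, rfl⟩
  · rintro v ⟨a, ha, rfl⟩
    have hT := hmin (Finset.univ.filter fun i => a i ≠ 0) (by
      rw [Finset.mem_filter]
      refine ⟨Finset.mem_univ _, ?_⟩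
      rw [← Set.ncard_coe_finset]
      convert ha using 2
      ext i; simp)
    refine hT.trans ?_
    unfold gfun
    refine mul_le_mul_of_nonneg_left ?_ (by norm_num)
    refine le_trans (le_of_eq ?_) (Finset.sum_le_sum_of_subset_of_nonneg (Finset.subset_univ
      (Finset.univ.filter fun i => a i ≠ 0)ᶜ)
      fun i _ _ => div_nonneg (sq_nonneg _) (hW i).le)
    refine Finset.sum_congr rfl fun i hi => ?_
    have : a i = 0 := by simpa using hi
    rw [this, add_zero]

theorem gfun_bdd (m n q : ℕ) (H : Matrix (Fin m) (Fin n) ℝ) (W : Fin m → ℝ) (hW : ∀ i, 0 < W i)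
    (hobs : TwoQObservable m n q H) (y : Fin m → ℝ) (S : Finset (Fin m)) (hS : S.card ≤ q) (φ : ℝ) :
    Bornology.IsBounded {x | gfun m n H W y S x ≤ φ} := by
  classical
  obtain ⟨hqm, hr⟩ := hobs
  obtain ⟨I, hIS, hI⟩ := Finset.exists_subset_card_eq (s := Sᶜ) (n := m - 2 * q) (by
    rw [Finset.card_compl, Fintype.card_fin]; omega)
  have hrk := hr I hI
  set A : Matrix { i // i ∈ I } (Fin n) ℝ := Matrix.of fun i j => H i.1 j with hA
  have hker : LinearMap.ker A.mulVecLin = ⊥ := by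
    have h1 := LinearMap.finrank_range_add_finrank_ker A.mulVecLin
    rw [← Matrix.rank, hrk, Module.finrank_fin_fun] at h1
    exact Submodule.finrank_eq_zero.1 (by omega)
  let L : EuclideanSpace ℝ (Fin n) →ₗ[ℝ] ({ i // i ∈ I } → ℝ) :=
    A.mulVecLin ∘ₗ (WithLp.linearEquiv 2 ℝ (Fin n → ℝ)).toLinearMap
  have hLker : LinearMap.ker L = ⊥ := by
    rw [LinearMap.ker_eq_bot] at hker ⊢
    exact hker.comp (WithLp.linearEquiv 2 ℝ (Fin n → ℝ)).injective
  obtain ⟨K, -, hK⟩ := L.exists_antilipschitzWith hLker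
  have hL : ∀ x i, L x i = ∑ j, H i.1 j * x j := fun x i => rfl
  refine (hK.isBounded_preimage (Metric.isBounded_Icc
    (fun i : { i // i ∈ I } => y i.1 - (1 + 2 * φ * W i.1))
    (fun i => y i.1 + (1 + 2 * φ * W i.1)))).subset ?_
  intro x hx
  have key : ∀ i : { i // i ∈ I }, (y i.1 - L x i) ^ 2 ≤ 2 * φ * W i.1 := by
    intro i
    have h1 : (y i.1 - L x i) ^ 2 / W i.1 ≤ ∑ i ∈ Sᶜ, (y i - (∑ j, H i j * x j)) ^ 2 / W i := by
      rw [hL]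
      exact Finset.single_le_sum (f := fun i => (y i - (∑ j, H i j * x j)) ^ 2 / W i)
        (fun i _ => div_nonneg (sq_nonneg _) (hW i).le) (hIS i.2)
    have h2 : (1 / 2 : ℝ) * ∑ i ∈ Sᶜ, (y i - (∑ j, H i j * x j)) ^ 2 / W i ≤ φ := hx
    rw [← div_le_iff₀ (hW _)]
    linarith
  constructor
  · intro i
    have := key i
    show y i.1 - (1 + 2 * φ * W i.1) ≤ L x i
    nlinarith [sq_nonneg (y i.1 - L x i - 1), sq_nonneg (y i.1 - L x i + 1)]
  · intro i
    have := key i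
    show L x i ≤ y i.1 + (1 + 2 * φ * W i.1)
    nlinarith [sq_nonneg (y i.1 - L x i - 1), sq_nonneg (y i.1 - L x i + 1)]

theorem sublevel_eq (m n q : ℕ) (H : Matrix (Fin m) (Fin n) ℝ) (W : Fin m → ℝ)
    (hW : ∀ i, 0 < W i) (y : Fin m → ℝ) (φ : ℝ) :
    sublevel m n q H W y φ = ⋃ S ∈ {S : Finset (Fin m) | S.card ≤ q},
      {x | gfun m n H W y S x ≤ φ} := by
  ext x
  simp only [Set.mem_iUnion, Set.mem_ofPred_eq, exists_prop, sublevel]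
  constructor
  · intro h
    obtain ⟨S, h1, h2⟩ := exists_le_dinc m n q H W hW y x
    exact ⟨S, h1, h2.trans h⟩
  · rintro ⟨S, h1, h2⟩
    exact (dinc_le m n q H W hW y S h1 x).trans h2

theorem sublevel_compact (m n q : ℕ) (H : Matrix (Fin m) (Fin n) ℝ) (W : Fin m → ℝ)
    (hW : ∀ i, 0 < W i) (hobs : TwoQObservable m n q H) (y : Fin m → ℝ) (φ : ℝ) :
    IsCompact (sublevel m n q H W y φ) := by
  rw [sublevel_eq m n q H W hW]
  refine (Set.toFinite _).isCompact_biUnion fun S hS => ?_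
  exact Metric.isCompact_of_isClosed_isBounded
    (isClosed_le (gfun_cont m n H W y S) continuous_const) (gfun_bdd m n q H W hW hobs y S hS φ)

theorem bdd_dist {n : ℕ} {A : Set (EuclideanSpace ℝ (Fin n))} (hA : Bornology.IsBounded A)
    (c : EuclideanSpace ℝ (Fin n)) :
    BddAbove (Set.range fun x => ⨆ _ : x ∈ A, dist x c) := by
  obtain ⟨R, hR⟩ := hA.subset_closedBall c
  refine ⟨max R 0, ?_⟩
  rintro _ ⟨x, rfl⟩
  exact Real.iSup_le (fun h => (hR h).trans (le_max_left _ _)) (le_max_right _ _)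

theorem le_sup {n : ℕ} {A : Set (EuclideanSpace ℝ (Fin n))} (hA : Bornology.IsBounded A)
    (c x : EuclideanSpace ℝ (Fin n)) (hx : x ∈ A) : dist x c ≤ ⨆ x ∈ A, dist x c := by
  refine le_trans ?_ (le_ciSup (bdd_dist hA c) x)
  simp [hx]

theorem move {n : ℕ} (hn : 1 ≤ n) (x c : EuclideanSpace ℝ (Fin n)) (r : ℝ) (hr : 0 ≤ r) :
    ∃ z, dist z x = r ∧ dist z c = dist x c + r := by
  have : Nonempty (Fin n) := ⟨⟨0, hn⟩⟩
  by_cases h : x = c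
  · subst h
    obtain ⟨v, hv⟩ := exists_norm_eq (EuclideanSpace ℝ (Fin n)) hr
    exact ⟨x + v, by simp [hv], by simp [hv]⟩
  · have h' : 0 < ‖x - c‖ := norm_pos_iff.2 (sub_ne_zero.2 h)
    refine ⟨x + (r / ‖x - c‖) • (x - c), ?_, ?_⟩
    · rw [dist_eq_norm, add_sub_cancel_left, norm_smul, Real.norm_of_nonneg (by positivity)]
      field_simp
    · have : x + (r / ‖x - c‖) • (x - c) - c = (1 + r / ‖x - c‖) • (x - c) := by
        module
      rw [dist_eq_norm, this, norm_smul, Real.norm_of_nonneg (by positivity), dist_eq_norm]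
      field_simp

/-- `φ ↦ rad(X(y,φ))` is strictly increasing wherever it is
positive: for `φ₁ < φ₂`, if `rad(X(y,φ₁)) > 0` then
`rad(X(y,φ₁)) < rad(X(y,φ₂))`. -/
theorem stmt_6 (m n q : ℕ) (hm : 1 ≤ m) (hn : 1 ≤ n) (hq : q ≤ m)
    (H : Matrix (Fin m) (Fin n) ℝ) (W : Fin m → ℝ) (hW : ∀ i, 0 < W i)
    (hobs : TwoQObservable m n q H) (y : Fin m → ℝ) :
    ∀ φ₁ φ₂ : ℝ, φ₁ < φ₂ → 0 < rad n (sublevel m n q H W y φ₁) →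
      rad n (sublevel m n q H W y φ₁) < rad n (sublevel m n q H W y φ₂) := by
  intro φ₁ φ₂ hφ hpos
  have hC1 := sublevel_compact m n q H W hW hobs y φ₁
  have hB2 := (sublevel_compact m n q H W hW hobs y φ₂).isBounded
  have hne : (sublevel m n q H W y φ₁).Nonempty := by
    by_contra h
    rw [Set.not_nonempty_iff_eq_empty] at h
    rw [h] at hpos
    simp [rad] at hpos
  have hU : IsOpen (⋃ S ∈ {S : Finset (Fin m) | S.card ≤ q}, {x | gfun m n H W y S x < φ₂}) :=
    isOpen_biUnion fun S _ => isOpen_lt (gfun_cont m n H W y S) continuous_const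
  obtain ⟨δ, hδ, hsub⟩ := hC1.exists_thickening_subset_open hU (by
    rw [sublevel_eq m n q H W hW]
    exact Set.iUnion₂_mono fun S _ x hx => lt_of_le_of_lt hx hφ)
  have hsub2 : Metric.thickening δ (sublevel m n q H W y φ₁) ⊆ sublevel m n q H W y φ₂ := by
    refine hsub.trans ?_
    rw [sublevel_eq m n q H W hW]
    exact Set.iUnion₂_mono fun S _ x (hx : gfun m n H W y S x < φ₂) =>
      (show gfun m n H W y S x ≤ φ₂ from hx.le)
  generalize sublevel m n q H W y φ₁ = A at *
  generalize sublevel m n q H W y φ₂ = B at *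
  have key : ∀ c : EuclideanSpace ℝ (Fin n),
      (⨆ x ∈ A, dist x c) + δ / 2 ≤ ⨆ x ∈ B, dist x c := by
    intro c
    have hx : ∀ x ∈ A, dist x c + δ / 2 ≤ ⨆ x ∈ B, dist x c := by
      intro x hx
      obtain ⟨z, hz1, hz2⟩ := move hn x c (δ / 2) (by positivity)
      rw [← hz2]
      exact le_sup hB2 c z (hsub2 (Metric.mem_thickening_iff.2 ⟨x, hx, by linarith⟩))
    obtain ⟨x0, hx0⟩ := hne
    have h0 := hx x0 hx0
    have hd := dist_nonneg (x := x0) (y := c)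
    have : (⨆ x ∈ A, dist x c) ≤ (⨆ x ∈ B, dist x c) - δ / 2 := by
      refine Real.iSup_le (fun x => Real.iSup_le (fun h => ?_) ?_) ?_
      · linarith [hx x h]
      · linarith
      · linarith
    linarith
  have : rad n A + δ / 2 ≤ rad n B := by
    unfold rad
    refine le_ciInf fun c => le_trans ?_ (key c)
    have : (⨅ c : EuclideanSpace ℝ (Fin n), ⨆ x ∈ A, dist x c) ≤ ⨆ x ∈ A, dist x c := by
      refine ciInf_le ⟨0, ?_⟩ c
      rintro _ ⟨c, rfl⟩
      exact Real.iSup_nonneg fun x => Real.iSup_nonneg fun _ => dist_nonneg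
    linarith
  linarith
end

section
/- Suppose 2q ≤ m and H is NOT 2q-observable, i.e., there exists an index set I ⊆ {1,…,m} with |I| = m − 2q and a nonzero vector v ∈ ℝ^n with H_I v = 0. Then for every δ > 0 there exist y* ∈ ℝ^m and x₁, x₂ ∈ ℝ^n such that d_{x₁}(y*) = 0, d_{x₂}(y*) = 0, and ‖x₁ − x₂‖₂ > δ. -/
theorem dinc_zero_aux (m n q : ℕ) (H : Matrix (Fin m) (Fin n) ℝ) (W : Fin m → ℝ)
    (hW : ∀ i, 0 < W i) (x : EuclideanSpace ℝ (Fin n)) (y : Fin m → ℝ)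
    (S : Finset (Fin m)) (hS : S.card ≤ q)
    (h : ∀ i, i ∉ S → y i = ∑ j, H i j * x j) : dinc m n q H W x y = 0 := by
  unfold dinc
  apply le_antisymm
  · apply csInf_le
    · refine ⟨0, ?_⟩
      rintro v ⟨a, -, rfl⟩
      exact mul_nonneg (by norm_num)
        (Finset.sum_nonneg fun i _ => div_nonneg (sq_nonneg _) (hW i).le)
    · refine ⟨fun i => (∑ j, H i j * x j) - y i, ?_, ?_⟩
      · refine le_trans ?_ hS
        rw [← Set.ncard_coe_finset]
        apply Set.ncard_le_ncard _ S.finite_toSet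
        intro i hi
        by_contra hc
        exact hi (by simp [h i hc])
      · simp
  · apply Real.sInf_nonneg
    rintro v ⟨a, -, rfl⟩
    exact mul_nonneg (by norm_num)
      (Finset.sum_nonneg fun i _ => div_nonneg (sq_nonneg _) (hW i).le)

/-- if `2q ≤ m` and `H` is NOT `2q`-observable (some `(m−2q)`-row
submatrix has a nonzero kernel vector), then for every `δ > 0` there exist
`y*` and states `x₁, x₂` with zero inconsistency and `‖x₁ − x₂‖₂ > δ`. -/
theorem stmt_7 (m n q : ℕ) (hm : 1 ≤ m) (hn : 1 ≤ n) (hq : q ≤ m)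
    (H : Matrix (Fin m) (Fin n) ℝ) (W : Fin m → ℝ) (hW : ∀ i, 0 < W i)
    (hqm : 2 * q ≤ m)
    (hnotobs : ∃ I : Finset (Fin m), I.card = m - 2 * q ∧
      ∃ v : EuclideanSpace ℝ (Fin n), v ≠ 0 ∧ ∀ i ∈ I, ∑ j, H i j * v j = 0) :
    ∀ δ : ℝ, 0 < δ →
      ∃ (ystar : Fin m → ℝ) (x₁ x₂ : EuclideanSpace ℝ (Fin n)),
        dinc m n q H W x₁ ystar = 0 ∧ dinc m n q H W x₂ ystar = 0 ∧
        δ < ‖x₁ - x₂‖ := by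
  obtain ⟨I, hI, v, hv, hIv⟩ := hnotobs
  intro δ hδ
  have hc : Iᶜ.card = 2 * q := by
    rw [Finset.card_compl, hI, Fintype.card_fin]; omega
  obtain ⟨J, hJ, hJc⟩ := Finset.exists_subset_card_eq (s := Iᶜ) (n := q) (by omega)
  have hvn : 0 < ‖v‖ := norm_pos_iff.mpr hv
  set t : ℝ := (δ + 1) / ‖v‖ with ht
  have ht0 : 0 < t := by positivity
  refine ⟨fun i => if i ∈ J then ∑ j, H i j * (t • v) j else 0, t • v, 0, ?_, ?_, ?_⟩
  · apply dinc_zero_aux m n q H W hW _ _ (Iᶜ \ J)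
    · rw [Finset.card_sdiff_of_subset hJ]; omega
    · intro i hi
      by_cases hiJ : i ∈ J
      · simp only [hiJ, if_true]
      · have hiI : i ∈ I := by
          by_contra hcon
          exact hi (by simp [hiJ, hcon])
        have h2 : ∑ j, H i j * (t • v) j = t * ∑ j, H i j * v j := by
          rw [Finset.mul_sum]
          refine Finset.sum_congr rfl fun j _ => ?_
          simp only [PiLp.smul_apply, smul_eq_mul]; ring
        simp only [hiJ, if_false]
        rw [h2, hIv i hiI, mul_zero]
  · apply dinc_zero_aux m n q H W hW _ _ J hJc.le
    intro i hi
    simp [hi]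
  · rw [sub_zero, norm_smul, Real.norm_of_nonneg ht0.le, ht, div_mul_cancel₀ _ hvn.ne']
    linarith
end

section
/- Assume H is 2q-observable and 2q ≤ m. Then for every δ > 0, u(δ) ≤ ū(δ), i.e., inf_{y ∈ ℝ^m} sup{ d_x(y) : x ∈ 𝕏(y,δ) } ≤ inf{ (1/2)·Σ_{i=1}^m (H_i x + s_i)²/W_i : x ∈ ℝ^n with ‖x‖₂ = δ, s ∈ ℝ^m with at most 2q nonzero entries }. -/
/-- The set `𝕏(y,δ) := ⋃ { X(y,φ) : φ ≥ 0, rad(X(y,φ)) ≤ δ }`. -/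
noncomputable def bigX (m n q : ℕ) (H : Matrix (Fin m) (Fin n) ℝ) (W : Fin m → ℝ)
    (y : Fin m → ℝ) (δ : ℝ) : Set (EuclideanSpace ℝ (Fin n)) :=
  ⋃ φ ∈ { φ : ℝ | 0 ≤ φ ∧ rad n (sublevel m n q H W y φ) ≤ δ },
    sublevel m n q H W y φ

/-- `u(y,δ) := sup { d_x(y) : x ∈ 𝕏(y,δ) }` (sup over ∅ taken to be 0). -/
noncomputable def uQty (m n q : ℕ) (H : Matrix (Fin m) (Fin n) ℝ) (W : Fin m → ℝ)
    (y : Fin m → ℝ) (δ : ℝ) : ℝ :=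
  sSup { v : ℝ | ∃ x ∈ bigX m n q H W y δ, v = dinc m n q H W x y }

/-- `u(δ) := inf_y u(y,δ)`. -/
noncomputable def uOpt (m n q : ℕ) (H : Matrix (Fin m) (Fin n) ℝ) (W : Fin m → ℝ)
    (δ : ℝ) : ℝ :=
  ⨅ y : Fin m → ℝ, uQty m n q H W y δ

/-- `ū(δ) := inf { (1/2)Σ (H_i x + s_i)²/W_i : ‖x‖₂ = δ, s 2q-sparse }`. -/
noncomputable def uBar (m n q : ℕ) (H : Matrix (Fin m) (Fin n) ℝ) (W : Fin m → ℝ)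
    (δ : ℝ) : ℝ :=
  sInf { v : ℝ | ∃ (x : EuclideanSpace ℝ (Fin n)) (s : Fin m → ℝ),
    ‖x‖ = δ ∧ (Function.support s).ncard ≤ 2 * q ∧
    v = (1 / 2 : ℝ) * ∑ i, ((∑ j, H i j * x j) + s i) ^ 2 / W i }

theorem dinc_nonneg' (m n q : ℕ) (H : Matrix (Fin m) (Fin n) ℝ) (W : Fin m → ℝ)
    (hW : ∀ i, 0 < W i) (x : EuclideanSpace ℝ (Fin n)) (y : Fin m → ℝ) :
    0 ≤ dinc m n q H W x y := by
  apply Real.sInf_nonneg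
  rintro v ⟨a, -, rfl⟩
  have : ∀ i ∈ Finset.univ, 0 ≤ (y i - (∑ j, H i j * x j) + a i) ^ 2 / W i :=
    fun i _ => div_nonneg (sq_nonneg _) (hW i).le
  have := Finset.sum_nonneg this
  linarith

theorem dinc_le' (m n q : ℕ) (H : Matrix (Fin m) (Fin n) ℝ) (W : Fin m → ℝ)
    (hW : ∀ i, 0 < W i) (x : EuclideanSpace ℝ (Fin n)) (y a : Fin m → ℝ)
    (ha : (Function.support a).ncard ≤ q) :
    dinc m n q H W x y ≤ (1 / 2 : ℝ) * ∑ i, (y i - (∑ j, H i j * x j) + a i) ^ 2 / W i := by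
  apply csInf_le
  · refine ⟨0, ?_⟩
    rintro v ⟨a, -, rfl⟩
    have : ∀ i ∈ Finset.univ, 0 ≤ (y i - (∑ j, H i j * x j) + a i) ^ 2 / W i :=
      fun i _ => div_nonneg (sq_nonneg _) (hW i).le
    have := Finset.sum_nonneg this
    linarith
  · exact ⟨a, ha, rfl⟩

theorem obs_bound (m n q : ℕ) (H : Matrix (Fin m) (Fin n) ℝ)
    (hobs : TwoQObservable m n q H) (I : Finset (Fin m)) (hI : I.card = m - 2 * q) :
    ∃ K : ℝ, 0 ≤ K ∧ ∀ (x : EuclideanSpace ℝ (Fin n)) (r : ℝ), 0 ≤ r →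
      (∀ i ∈ I, |∑ j, H i j * x j| ≤ r) → ‖x‖ ≤ K * r := by
  have hr := hobs.2 I hI
  set A : Matrix { i // i ∈ I } (Fin n) ℝ := Matrix.of fun i j => H i.1 j with hA
  have hinj : Function.Injective A.mulVecLin := by
    rw [← LinearMap.ker_eq_bot, ← Submodule.finrank_eq_zero]
    have h := LinearMap.finrank_range_add_finrank_ker A.mulVecLin
    have h2 : Module.finrank ℝ (LinearMap.range A.mulVecLin) = n := hr
    rw [h2] at h
    simp at h
    simpa using h
  let L : EuclideanSpace ℝ (Fin n) →ₗ[ℝ] ({ i // i ∈ I } → ℝ) :=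
    A.mulVecLin ∘ₗ (WithLp.linearEquiv 2 ℝ (Fin n → ℝ)).toLinearMap
  have hL : Function.Injective L := hinj.comp (WithLp.linearEquiv 2 ℝ (Fin n → ℝ)).injective
  obtain ⟨K, -, hK⟩ := (LinearMap.injective_iff_antilipschitz L).1 hL
  refine ⟨K, K.2, fun x r hr0 h => ?_⟩
  have h1 := hK.le_mul_dist x 0
  simp only [map_zero, dist_zero_right] at h1
  refine h1.trans (mul_le_mul_of_nonneg_left ?_ K.2)
  rw [pi_norm_le_iff_of_nonneg hr0]
  intro i
  exact h i.1 i.2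

theorem sublevel_bdd (m n q : ℕ) (H : Matrix (Fin m) (Fin n) ℝ) (W : Fin m → ℝ)
    (hW : ∀ i, 0 < W i) (hobs : TwoQObservable m n q H) (y : Fin m → ℝ) (φ : ℝ) (hφ : 0 ≤ φ) :
    ∃ R : ℝ, ∀ x ∈ sublevel m n q H W y φ, ‖x‖ ≤ R := by
  classical
  choose! K hK0 hK using obs_bound m n q H hobs
  let r : ℝ := ∑ i, (|y i| + Real.sqrt (2 * (φ + 1) * W i))
  have hr0 : 0 ≤ r := Finset.sum_nonneg fun i _ => by positivity
  refine ⟨(∑ I : Finset (Fin m), |K I|) * r, fun x hx => ?_⟩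
  have hx' : dinc m n q H W x y < φ + 1 := lt_of_le_of_lt hx (by linarith)
  obtain ⟨v, ⟨a, ha, rfl⟩, hv⟩ := exists_lt_of_csInf_lt
    (by exact ⟨_, 0, by simp, rfl⟩) hx'
  have hcard : m - 2 * q ≤ (Finset.univ.filter fun i => a i = 0).card := by
    have h1 : (Function.support a).ncard = (Finset.univ.filter fun i => ¬ a i = 0).card := by
      rw [← Set.ncard_coe_finset]; congr 1; ext i; simp
    have h2 := Finset.card_filter_add_card_filter_not (s := (Finset.univ : Finset (Fin m)))
      (fun i => a i = 0)
    simp only [Finset.card_univ, Fintype.card_fin] at h2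
    omega
  obtain ⟨I, hIs, hI⟩ := Finset.exists_subset_card_eq hcard
  have hb : ∀ i ∈ I, |∑ j, H i j * x j| ≤ r := by
    intro i hi
    have hai : a i = 0 := by simpa using hIs hi
    have hs : (y i - (∑ j, H i j * x j) + a i) ^ 2 / W i ≤ 
        ∑ i, (y i - (∑ j, H i j * x j) + a i) ^ 2 / W i :=
      Finset.single_le_sum (f := fun i => (y i - (∑ j, H i j * x j) + a i) ^ 2 / W i)
        (fun i _ => div_nonneg (sq_nonneg _) (hW i).le) (Finset.mem_univ i)
    have h2 : (y i - (∑ j, H i j * x j)) ^ 2 ≤ 2 * (φ + 1) * W i := by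
      rw [← div_le_iff₀ (hW i)]
      rw [hai, add_zero] at hs
      linarith
    have h3 : |y i - (∑ j, H i j * x j)| ≤ Real.sqrt (2 * (φ + 1) * W i) := Real.abs_le_sqrt h2
    have h4 : |y i| + Real.sqrt (2 * (φ + 1) * W i) ≤ r :=
      Finset.single_le_sum (f := fun i => |y i| + Real.sqrt (2 * (φ + 1) * W i))
        (fun i _ => by positivity) (Finset.mem_univ i)
    have h5 := abs_sub_abs_le_abs_sub (∑ j, H i j * x j) (y i)
    rw [abs_sub_comm] at h5
    linarith
  refine (hK I hI x r hr0 hb).trans (mul_le_mul_of_nonneg_right ?_ hr0)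
  exact (le_abs_self _).trans
    (Finset.single_le_sum (f := fun I => |K I|) (fun i _ => abs_nonneg _) (Finset.mem_univ I))

theorem le_rad (n : ℕ) (A : Set (EuclideanSpace ℝ (Fin n))) (R : ℝ) (hA : ∀ x ∈ A, ‖x‖ ≤ R)
    (x : EuclideanSpace ℝ (Fin n)) (h1 : x ∈ A) (h2 : -x ∈ A) : ‖x‖ ≤ rad n A := by
  apply le_ciInf
  intro c
  have hbdd : BddAbove (Set.range fun z => ⨆ (_ : z ∈ A), dist z c) := by
    refine ⟨R + ‖c‖, ?_⟩
    rintro _ ⟨z, rfl⟩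
    have hR : 0 ≤ R := (norm_nonneg _).trans (hA x h1)
    refine Real.iSup_le (fun hz => ?_) (by positivity)
    have := hA z hz
    rw [dist_eq_norm]
    linarith [norm_sub_le z c]
  have key : ∀ z ∈ A, dist z c ≤ ⨆ z ∈ A, dist z c := by
    intro z hz
    have := le_ciSup hbdd z
    simpa [hz] using this
  have a1 := key _ h1
  have a2 := key _ h2
  have a3 := dist_triangle_right x (-x) c
  have a4 : dist x (-x) = 2 * ‖x‖ := by
    rw [dist_eq_norm, sub_neg_eq_add, ← two_smul ℝ x, norm_smul]; simp
  linarith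

theorem uOpt_le_of (m n q : ℕ) (H : Matrix (Fin m) (Fin n) ℝ) (W : Fin m → ℝ)
    (hW : ∀ i, 0 < W i) (hobs : TwoQObservable m n q H) (δ : ℝ)
    (x : EuclideanSpace ℝ (Fin n)) (s : Fin m → ℝ) (hx : δ < ‖x‖)
    (hs : (Function.support s).ncard ≤ 2 * q) :
    uOpt m n q H W δ ≤ (1 / 2 : ℝ) * ∑ i, ((∑ j, H i j * x j) + s i) ^ 2 / W i := by
  classical
  set v := (1 / 2 : ℝ) * ∑ i, ((∑ j, H i j * x j) + s i) ^ 2 / W i with hv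
  have hv0 : 0 ≤ v := mul_nonneg (by norm_num)
    (Finset.sum_nonneg fun i _ => div_nonneg (sq_nonneg _) (hW i).le)
  have hu0 : ∀ y, 0 ≤ uQty m n q H W y δ := by
    intro y
    apply Real.sSup_nonneg
    rintro _ ⟨z, -, rfl⟩
    exact dinc_nonneg' m n q H W hW z y
  obtain ⟨S, hS1, hS2⟩ := Set.exists_subset_card_eq
    (s := Function.support s) (n := min q (Function.support s).ncard) (min_le_right _ _)
  let y : Fin m → ℝ := fun i => if i ∈ S then s i else - s i
  refine (ciInf_le ⟨0, by rintro _ ⟨y, rfl⟩; exact hu0 y⟩ y).trans ?_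
  have hd1 : dinc m n q H W x y ≤ v := by
    refine (dinc_le' m n q H W hW x y (fun i => - s i - y i) ?_).trans (le_of_eq ?_)
    · refine (Set.ncard_le_ncard (t := S) ?_ (Set.toFinite _)).trans (by omega)
      intro i hi
      by_contra h
      simp [y, h] at hi
    · rw [hv]; congr 1; apply Finset.sum_congr rfl; intro i _; ring
  have hd2 : dinc m n q H W (-x) y ≤ v := by
    refine (dinc_le' m n q H W hW (-x) y (fun i => s i - y i) ?_).trans (le_of_eq ?_)
    · refine (Set.ncard_le_ncard (t := Function.support s \ S) ?_ (Set.toFinite _)).trans ?_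
      · intro i hi
        by_cases h : i ∈ S
        · simp [y, h] at hi
        · refine ⟨?_, h⟩
          intro h0
          simp [y, h0] at hi
      · rw [Set.ncard_sdiff hS1]; omega
    · rw [hv]; congr 1; apply Finset.sum_congr rfl; intro i _
      simp
      ring
  apply Real.sSup_le _ hv0
  rintro _ ⟨z, hz, rfl⟩
  simp only [bigX, Set.mem_iUnion, Set.mem_ofPred_eq, exists_prop] at hz
  obtain ⟨φ, ⟨hφ0, hφ⟩, hz⟩ := hz
  by_contra! hlt
  have hvφ : v ≤ φ := hlt.le.trans hz
  obtain ⟨R, hR⟩ := sublevel_bdd m n q H W hW hobs y φ hφ0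
  have := le_rad n _ R hR x (hd1.trans hvφ) (hd2.trans hvφ)
  linarith

/-- under `2q`-observability, `u(δ) ≤ ū(δ)` for every `δ > 0`. -/
theorem stmt_8 (m n q : ℕ) (hm : 1 ≤ m) (hn : 1 ≤ n) (hq : q ≤ m)
    (H : Matrix (Fin m) (Fin n) ℝ) (W : Fin m → ℝ) (hW : ∀ i, 0 < W i)
    (hobs : TwoQObservable m n q H) :
    ∀ δ : ℝ, 0 < δ → uOpt m n q H W δ ≤ uBar m n q H W δ := by
  intro δ hδ
  apply le_csInf
  · refine ⟨_, EuclideanSpace.single (⟨0, hn⟩ : Fin n) δ, 0, ?_, by simp, rfl⟩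
    simp [abs_of_pos hδ]
  rintro _ ⟨x, s, hx, hs, rfl⟩
  set v := (1 / 2 : ℝ) * ∑ i, ((∑ j, H i j * x j) + s i) ^ 2 / W i with hv
  have key : ∀ t : ℝ, 1 < t → uOpt m n q H W δ ≤ t ^ 2 * v := by
    intro t ht
    refine (uOpt_le_of m n q H W hW hobs δ (t • x) (t • s) ?_ ?_).trans (le_of_eq ?_)
    · rw [norm_smul, hx, Real.norm_eq_abs, abs_of_pos (by linarith)]
      nlinarith
    · rw [Function.support_const_smul_of_ne_zero _ _ (by linarith)]; exact hs
    · rw [hv, mul_left_comm]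
      congr 1
      rw [Finset.mul_sum]
      apply Finset.sum_congr rfl
      intro i _
      have : ∑ j, H i j * (t • x) j = t * ∑ j, H i j * x j := by
        rw [Finset.mul_sum]
        apply Finset.sum_congr rfl
        intro j _
        simp only [PiLp.smul_apply, smul_eq_mul]
        ring
      rw [this]
      simp only [Pi.smul_apply, smul_eq_mul]
      ring
  have hlim : Filter.Tendsto (fun t : ℝ => t ^ 2 * v) (nhdsWithin 1 (Set.Ioi 1)) (nhds v) := by
    have : Continuous fun t : ℝ => t ^ 2 * v := by fun_prop
    have h := this.tendsto 1
    simp only [one_pow, one_mul] at h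
    exact h.mono_left nhdsWithin_le_nhds
  exact ge_of_tendsto hlim (by filter_upwards [self_mem_nhdsWithin] with t ht using key t ht)
end

section
/- Let x ∈ ℝ^n, δ > 0, let x* ∈ ℝ^n satisfy ‖x*‖₂ = 1, and let s* ∈ ℝ^m have at most 2q nonzero entries. Let I₀, I₁ ⊆ {1,…,m} be disjoint sets with I₀ ∪ I₁ = supp(s*), |I₀| ≤ q and |I₁| ≤ q, and set v := (1/2)·Σ_{i=1}^m (H_i x* + s*_i)²/W_i. Define y* ∈ ℝ^m by y*_i = H_i x for i ∉ supp(s*), y*_i = H_i (x − δ·x*) for i ∈ I₀, and y*_i = H_i (x + δ·x*) for i ∈ I₁. Then d_{x − δ·x*}(y*) ≤ δ²·v, d_{x + δ·x*}(y*) ≤ δ²·v, and ‖(x + δ·x*) − (x − δ·x*)‖₂ = 2δ. -/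
theorem dinc_le_aux (m n q : ℕ) (H : Matrix (Fin m) (Fin n) ℝ) (W : Fin m → ℝ)
    (hW : ∀ i, 0 < W i) (x : EuclideanSpace ℝ (Fin n)) (y : Fin m → ℝ) (δ : ℝ) (r : Fin m → ℝ)
    (I : Finset (Fin m)) (hI : I.card ≤ q)
    (h : ∀ i, i ∉ I → (y i - ∑ j, H i j * x j) ^ 2 ≤ δ ^ 2 * r i ^ 2) :
    dinc m n q H W x y ≤ δ ^ 2 * ((1 / 2 : ℝ) * ∑ i, r i ^ 2 / W i) := by
  classical
  unfold dinc
  refine le_trans (csInf_le ⟨0, ?_⟩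
    ⟨fun i => if i ∈ I then -(y i - ∑ j, H i j * x j) else 0, ?_, rfl⟩) ?_
  · rintro _ ⟨a, -, rfl⟩
    have : 0 ≤ ∑ i, (y i - (∑ j, H i j * x j) + a i) ^ 2 / W i :=
      Finset.sum_nonneg fun i _ => div_nonneg (sq_nonneg _) (hW i).le
    positivity
  · refine le_trans ?_ hI
    rw [← Set.ncard_coe_finset]
    refine Set.ncard_le_ncard ?_ (Finset.finite_toSet I)
    intro i hi
    by_contra hn
    exact hi (if_neg hn)
  · rw [mul_left_comm, Finset.mul_sum _ _ (δ ^ 2)]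
    refine mul_le_mul_of_nonneg_left (Finset.sum_le_sum fun i _ => ?_)
      (show (0 : ℝ) ≤ 1 / 2 by norm_num)
    rw [← mul_div_assoc]
    refine div_le_div_of_nonneg_right ?_ (hW i).le
    by_cases hi : i ∈ I
    · simp only [hi, if_true, add_neg_cancel]
      rw [zero_pow two_ne_zero]
      positivity
    · simpa only [hi, if_false, add_zero] using h i hi

/-- the construction used in the proof of the upper bound:
with `y*` agreeing with `Hx` off `supp(s*)`, with `H(x − δx*)` on `I₀`, and
with `H(x + δx*)` on `I₁`, both `x ± δx*` have inconsistency at most `δ²·v`,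
and they are `2δ` apart. -/
theorem stmt_10 (m n q : ℕ) (hm : 1 ≤ m) (hn : 1 ≤ n) (hq : q ≤ m)
    (H : Matrix (Fin m) (Fin n) ℝ) (W : Fin m → ℝ) (hW : ∀ i, 0 < W i)
    (x xstar : EuclideanSpace ℝ (Fin n)) (δ : ℝ) (hδ : 0 < δ)
    (hxstar : ‖xstar‖ = 1)
    (sstar : Fin m → ℝ) (hs : (Function.support sstar).ncard ≤ 2 * q)
    (I₀ I₁ : Finset (Fin m)) (hdisj : Disjoint I₀ I₁)
    (hcover : (↑I₀ ∪ ↑I₁ : Set (Fin m)) = Function.support sstar)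
    (hI₀ : I₀.card ≤ q) (hI₁ : I₁.card ≤ q)
    (v : ℝ) (hv : v = (1 / 2 : ℝ) * ∑ i, ((∑ j, H i j * xstar j) + sstar i) ^ 2 / W i)
    (ystar : Fin m → ℝ)
    (hy0 : ∀ i, i ∉ Function.support sstar → ystar i = ∑ j, H i j * x j)
    (hy1 : ∀ i ∈ I₀, ystar i = ∑ j, H i j * (x j - δ * xstar j))
    (hy2 : ∀ i ∈ I₁, ystar i = ∑ j, H i j * (x j + δ * xstar j)) :
    dinc m n q H W (x - δ • xstar) ystar ≤ δ ^ 2 * v ∧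
    dinc m n q H W (x + δ • xstar) ystar ≤ δ ^ 2 * v ∧
    ‖(x + δ • xstar) - (x - δ • xstar)‖ = 2 * δ := by
  have key : ∀ i, i ∉ I₀ → i ∉ I₁ → sstar i = 0 ∧ ystar i = ∑ j, H i j * x j := by
    intro i h0 h1
    have hns : i ∉ Function.support sstar := by
      rw [← hcover]
      simp [h0, h1]
    exact ⟨by simpa using hns, hy0 i hns⟩
  subst hv
  refine ⟨dinc_le_aux m n q H W hW _ _ δ _ I₁ hI₁ ?_,
    dinc_le_aux m n q H W hW _ _ δ _ I₀ hI₀ ?_, ?_⟩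
  · intro i hi
    by_cases h0 : i ∈ I₀
    · rw [hy1 i h0]
      simp only [PiLp.sub_apply, PiLp.smul_apply, smul_eq_mul, sub_self]
      rw [zero_pow two_ne_zero]
      exact mul_nonneg (sq_nonneg _) (sq_nonneg _)
    · obtain ⟨e1, e2⟩ := key i h0 hi
      rw [e1, e2]
      have : ∑ j, H i j * (x - δ • xstar) j = (∑ j, H i j * x j) - δ * ∑ j, H i j * xstar j := by
        rw [Finset.mul_sum, ← Finset.sum_sub_distrib]
        refine Finset.sum_congr rfl fun j _ => ?_
        simp only [PiLp.sub_apply, PiLp.smul_apply, smul_eq_mul]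
        ring
      rw [this]
      apply le_of_eq
      ring
  · intro i hi
    by_cases h0 : i ∈ I₁
    · rw [hy2 i h0]
      simp only [PiLp.add_apply, PiLp.smul_apply, smul_eq_mul, sub_self]
      rw [zero_pow two_ne_zero]
      exact mul_nonneg (sq_nonneg _) (sq_nonneg _)
    · obtain ⟨e1, e2⟩ := key i hi h0
      rw [e1, e2]
      have : ∑ j, H i j * (x + δ • xstar) j = (∑ j, H i j * x j) + δ * ∑ j, H i j * xstar j := by
        rw [Finset.mul_sum, ← Finset.sum_add_distrib]
        refine Finset.sum_congr rfl fun j _ => ?_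
        simp only [PiLp.add_apply, PiLp.smul_apply, smul_eq_mul]
        ring
      rw [this]
      apply le_of_eq
      ring
  · have : (x + δ • xstar) - (x - δ • xstar) = (2 * δ) • xstar := by
      rw [mul_smul, two_smul]
      abel
    rw [this, norm_smul, hxstar, mul_one, Real.norm_of_nonneg (by positivity)]
end
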